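/- arXiv:2605.28449 — 4 statements merged into one kernel-verified Lean document; each statement's English description precedes it below -/
import Mathlib

section
/- Let u, v ≥ 0 and h ≥ 1 be real numbers. Then every real solution x of the equation x = u + v·(log x)^h satisfies x < max{ 2^h·(u^{1/h} + v^{1/h}·log(h^h·v))^h , 2^h·(u^{1/h} + 2e^2)^h }. -/
open Real

/-!
Put `z = x^{1/h}`. Since `t ↦ t^{1/h}` is subadditive on `[0, ∞)`, for `x ≥ 1` and `v > 0` the
inequality `x ≤ u + v (log x)^h` gives `z ≤ u^{1/h} + c log z` with `c = h v^{1/h}`. Writing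
`z = c t` and using `2 log t < t`, the term `c log z = c log c + c log t` is less than
`c log c + z / 2`, so `z < 2 (u^{1/h} + c log c)`; the `h`-th power of this is the first bound.
The second bound absorbs the cases `x ≤ 1` and `v ≤ 0`, in which `x ≤ max 1 u`.
-/

theorem two_mul_log_lt_self {t : ℝ} (ht : 0 < t) : 2 * log t < t := by
  have hlog : log (t / 2) ≤ t / 2 - 1 := log_le_sub_one_of_pos (by positivity)
  rw [log_div ht.ne' two_ne_zero] at hlog
  linarith [log_two_lt_d9]

theorem lt_two_mul_add_mul_log_of_le_add_mul_log {z a c : ℝ} (hz : 0 < z) (hc : 0 < c)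
    (hle : z ≤ a + c * log z) : z < 2 * (a + c * log c) := by
  have hlog : 2 * log (z / c) < z / c := two_mul_log_lt_self (div_pos hz hc)
  rw [lt_div_iff₀ hc, log_div hz.ne' hc.ne'] at hlog
  linarith

theorem lt_rpow_mul_rpow_of_rpow_one_div_lt {x a y h : ℝ} (hx : 0 ≤ x) (ha : 0 < a) (hh : 0 < h)
    (hlt : x ^ (1 / h) < a * y) : x < a ^ h * y ^ h := by
  have hay : 0 < a * y := (rpow_nonneg hx _).trans_lt hlt
  have hy : 0 < y := pos_of_mul_pos_right hay ha.le
  rwa [← mul_rpow ha.le hy.le, ← rpow_inv_lt_iff_of_pos hx hay.le hh, ← one_div]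

theorem mul_log_mul_rpow_one_div {a v h : ℝ} (ha : 0 < a) (hv : 0 < v) (hh : h ≠ 0) :
    h * log (a * v ^ (1 / h)) = log (a ^ h * v) := by
  rw [← log_rpow (by positivity), mul_rpow ha.le (by positivity), ← rpow_mul hv.le,
    one_div_mul_cancel hh, rpow_one]

theorem rpow_one_div_le_add_mul_log {u v h x : ℝ} (hu : 0 ≤ u) (hv : 0 ≤ v) (hh : 1 ≤ h)
    (hx : 1 ≤ x) (hle : x ≤ u + v * log x ^ h) :
    x ^ (1 / h) ≤ u ^ (1 / h) + h * v ^ (1 / h) * log (x ^ (1 / h)) := by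
  have hh₀ : 0 < h := one_pos.trans_le hh
  have hx₀ : 0 < x := one_pos.trans_le hx
  have hlog : 0 ≤ log x := log_nonneg hx
  calc
    x ^ (1 / h) ≤ (u + v * log x ^ h) ^ (1 / h) := by gcongr
    _ ≤ u ^ (1 / h) + (v * log x ^ h) ^ (1 / h) :=
      rpow_add_le_add_rpow hu (by positivity) (by positivity) ((div_le_one hh₀).2 hh)
    _ = u ^ (1 / h) + v ^ (1 / h) * log x := by
      rw [mul_rpow hv (by positivity), ← rpow_mul hlog, mul_one_div_cancel hh₀.ne', rpow_one]
    _ = u ^ (1 / h) + h * v ^ (1 / h) * log (x ^ (1 / h)) := by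
      rw [log_rpow hx₀]
      field_simp

theorem lt_two_rpow_mul_of_le_add_mul_log_rpow {u v h x : ℝ} (hu : 0 ≤ u) (hv : 0 < v)
    (hh : 1 ≤ h) (hx : 1 ≤ x) (hle : x ≤ u + v * log x ^ h) :
    x < 2 ^ h * (u ^ (1 / h) + v ^ (1 / h) * log (h ^ h * v)) ^ h := by
  have hh₀ : 0 < h := one_pos.trans_le hh
  have hx₀ : 0 < x := one_pos.trans_le hx
  apply lt_rpow_mul_rpow_of_rpow_one_div_lt hx₀.le two_pos hh₀
  calc
    x ^ (1 / h) < 2 * (u ^ (1 / h) + h * v ^ (1 / h) * log (h * v ^ (1 / h))) :=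
      lt_two_mul_add_mul_log_of_le_add_mul_log (by positivity) (by positivity)
        (rpow_one_div_le_add_mul_log hu hv.le hh hx hle)
    _ = 2 * (u ^ (1 / h) + v ^ (1 / h) * log (h ^ h * v)) := by
      rw [← mul_log_mul_rpow_one_div hh₀ hv hh₀.ne']
      ring

theorem max_one_lt_two_rpow_mul {u h C : ℝ} (hu : 0 ≤ u) (hh : 0 < h) (hC : 1 / 2 < C) :
    max 1 u < 2 ^ h * (u ^ (1 / h) + C) ^ h := by
  have hroot : 0 ≤ u ^ (1 / h) := rpow_nonneg hu _
  apply max_lt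
  · apply lt_rpow_mul_rpow_of_rpow_one_div_lt zero_le_one two_pos hh
    rw [one_rpow]
    linarith
  · apply lt_rpow_mul_rpow_of_rpow_one_div_lt hu two_pos hh
    linarith

theorem petho_bound_general {u v h x C : ℝ} (hu : 0 ≤ u) (hh : 1 ≤ h) (hC : 1 / 2 < C)
    (hle : x ≤ u + v * log x ^ h) :
    x < max (2 ^ h * (u ^ (1 / h) + v ^ (1 / h) * log (h ^ h * v)) ^ h)
      (2 ^ h * (u ^ (1 / h) + C) ^ h) := by
  have hmax : max 1 u < 2 ^ h * (u ^ (1 / h) + C) ^ h :=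
    max_one_lt_two_rpow_mul hu (one_pos.trans_le hh) hC
  rcases le_total x 1 with hx | hx
  · exact lt_max_of_lt_right ((le_max_of_le_left hx).trans_lt hmax)
  rcases le_or_gt v 0 with hv | hv
  · have hxu : x ≤ u := hle.trans <| add_le_of_nonpos_right <|
      mul_nonpos_of_nonpos_of_nonneg hv (rpow_nonneg (log_nonneg hx) h)
    exact lt_max_of_lt_right ((le_max_of_le_right hxu).trans_lt hmax)
  · exact lt_max_of_lt_left (lt_two_rpow_mul_of_le_add_mul_log_rpow hu hv hh hx hle)

/-- Pethő's lemma: if `u, v ≥ 0`, `h ≥ 1` and `x` is a real solution of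
`x = u + v (log x)^h`, then
`x < max { 2^h (u^{1/h} + v^{1/h} log(h^h v))^h , 2^h (u^{1/h} + 2 e²)^h }`. -/
theorem petho_bound (u v h x : ℝ) (hu : 0 ≤ u) (hv : 0 ≤ v) (hh : 1 ≤ h)
    (hx : x = u + v * (Real.log x) ^ h) :
    x < max ((2 : ℝ) ^ h * (u ^ (1 / h) + v ^ (1 / h) * Real.log (h ^ h * v)) ^ h)
            ((2 : ℝ) ^ h * (u ^ (1 / h) + 2 * Real.exp 1 ^ 2) ^ h) := by
  have hC : 1 / 2 < 2 * exp 1 ^ 2 := by nlinarith [exp_one_gt_two]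
  exact petho_bound_general hu hh hC hx.le
end

section
/- Let k be a positive integer, t an integer, and p an odd prime. Then there are exactly p − 1 integers n in {0, 1, …, p^k(p−1) − 1} such that p^k divides n·2^n − t. -/
/-!
On a residue class modulo `p - 1`, the value of `n * a ^ n` modulo `p ^ k` determines `n` modulo
`p ^ k`, by induction on `k`: if `m` and `n` agree modulo `p ^ k`, then they agree modulo
`p ^ k * (p - 1) = φ (p ^ (k + 1))`, so `a ^ m` and `a ^ n` agree modulo `p ^ (k + 1)` and can be
cancelled. Hence `n ↦ (n, n * a ^ n)` is injective from `{0, …, p ^ k * (p - 1) - 1}` to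
`ℤ/(p - 1) × ℤ/p ^ k`, and it is bijective because both sides have the same size. So every class
modulo `p - 1` contains exactly one solution of `n * a ^ n ≡ t`.
-/

theorem pow_modEq_pow_of_modEq_totient {a : ℤ} {N m n : ℕ} (ha : IsCoprime a N)
    (h : m ≡ n [MOD N.totient]) : a ^ m ≡ a ^ n [ZMOD N] := by
  obtain ⟨u, hu⟩ := (ZMod.coe_int_isUnit_iff_isCoprime a N).2 ha.symm
  have hpow : u ^ m = u ^ n := pow_eq_pow_of_modEq h (ZMod.pow_totient u)
  rw [← ZMod.intCast_eq_intCast_iff, Int.cast_pow, Int.cast_pow, ← hu]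
  exact_mod_cast congrArg Units.val hpow

theorem coprime_pow_sub_one {n : ℕ} (hn : 1 ≤ n) (k : ℕ) : (n ^ k).Coprime (n - 1) :=
  ((Nat.coprime_self_sub_right hn).2 (Nat.coprime_one_right n)).pow_left k

section

variable {p : ℕ} {a : ℤ}

theorem modEq_of_mul_pow_modEq {k m n : ℕ} (hp : p.Prime) (ha : IsCoprime a p)
    (hmn : m ≡ n [MOD p - 1]) (h : m * a ^ m ≡ n * a ^ n [ZMOD p ^ k]) :
    m ≡ n [MOD p ^ k] := by
  induction k with
  | zero => simpa using Nat.modEq_one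
  | succ k ih =>
    have hk : m ≡ n [MOD p ^ k] := ih (h.of_dvd (pow_dvd_pow _ k.le_succ))
    have htotient : m ≡ n [MOD (p ^ (k + 1)).totient] := by
      rw [Nat.totient_prime_pow_succ hp]
      exact (Nat.modEq_and_modEq_iff_modEq_mul (coprime_pow_sub_one hp.one_le k)).1 ⟨hk, hmn⟩
    have hcoprime : IsCoprime a (p ^ (k + 1) : ℕ) := by exact_mod_cast ha.pow_right
    have hpow : a ^ m ≡ a ^ n [ZMOD p ^ (k + 1)] := by
      exact_mod_cast pow_modEq_pow_of_modEq_totient hcoprime htotient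
    have hmul : (m : ℤ) * a ^ n ≡ n * a ^ n [ZMOD p ^ (k + 1)] := (hpow.mul_left m).symm.trans h
    rw [← Int.natCast_modEq_iff, Nat.cast_pow, Int.modEq_iff_dvd]
    rw [Int.modEq_iff_dvd, ← sub_mul] at hmul
    exact ha.symm.pow.dvd_of_dvd_mul_right hmul

theorem bijective_mod_sub_one_and_mul_pow (hp : p.Prime) (ha : IsCoprime a p) (k : ℕ) :
    Function.Bijective fun n : Fin (p ^ k * (p - 1)) ↦
      ((n : ZMod (p - 1)), (n * a ^ (n : ℕ) : ZMod (p ^ k))) := by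
  have : NeZero (p ^ k) := ⟨pow_ne_zero k hp.ne_zero⟩
  have : NeZero (p - 1) := ⟨(Nat.sub_pos_of_lt hp.one_lt).ne'⟩
  refine (Fintype.bijective_iff_injective_and_card _).2 ⟨fun m n hmn ↦ ?_, ?_⟩
  · obtain ⟨hclass, hvalue⟩ := Prod.mk.inj hmn
    have hsub : (m : ℕ) ≡ n [MOD p - 1] := (ZMod.natCast_eq_natCast_iff _ _ _).1 hclass
    have hpow : (m : ℕ) ≡ n [MOD p ^ k] := by
      refine modEq_of_mul_pow_modEq hp ha hsub ?_
      rw [← Nat.cast_pow, ← ZMod.intCast_eq_intCast_iff]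
      exact_mod_cast hvalue
    have hmod : (m : ℕ) ≡ n [MOD p ^ k * (p - 1)] :=
      (Nat.modEq_and_modEq_iff_modEq_mul (coprime_pow_sub_one hp.one_le k)).1 ⟨hpow, hsub⟩
    exact Fin.ext (hmod.eq_of_lt_of_lt m.isLt n.isLt)
  · simp [ZMod.card, mul_comm]

theorem existsUnique_modEq_and_mul_pow_modEq (hp : p.Prime) (ha : IsCoprime a p)
    (k r : ℕ) (t : ℤ) :
    ∃! n : ℕ, n < p ^ k * (p - 1) ∧ n ≡ r [MOD p - 1] ∧ n * a ^ n ≡ t [ZMOD p ^ k] := by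
  have hiff (n : ℕ) : ((n : ZMod (p - 1)), (n * a ^ n : ZMod (p ^ k))) = (↑r, ↑t) ↔
      n ≡ r [MOD p - 1] ∧ n * a ^ n ≡ t [ZMOD p ^ k] := by
    rw [Prod.mk.injEq, ZMod.natCast_eq_natCast_iff, ← Nat.cast_pow, ← ZMod.intCast_eq_intCast_iff]
    push_cast
    rfl
  obtain ⟨n, hn, hunique⟩ := (bijective_mod_sub_one_and_mul_pow hp ha k).existsUnique (↑r, ↑t)
  refine ⟨n, ⟨n.isLt, (hiff n).1 hn⟩, fun m ⟨hlt, hm⟩ ↦ ?_⟩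
  exact congrArg Fin.val (hunique ⟨m, hlt⟩ ((hiff m).2 hm))

theorem count_n_two_pow_cong_general (hp : p.Prime) (ha : IsCoprime a p)
    (k : ℕ) (t : ℤ) :
    ((Finset.range (p ^ k * (p - 1))).filter
      (fun n : ℕ => (p : ℤ) ^ k ∣ (n : ℤ) * a ^ n - t)).card = p - 1 := by
  have hdvd_iff (n : ℕ) : (p : ℤ) ^ k ∣ n * a ^ n - t ↔ n * a ^ n ≡ t [ZMOD p ^ k] := by
    rw [Int.modEq_comm, Int.modEq_iff_dvd]
  simp only [hdvd_iff]
  rw [← Finset.card_range (p - 1)]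
  refine Finset.card_nbij (· % (p - 1)) (fun n _ ↦ ?_) (fun m hm n hn hmn ↦ ?_) fun r hr ↦ ?_
  · exact Finset.mem_coe.2 (Finset.mem_range.2 (Nat.mod_lt n (Nat.sub_pos_of_lt hp.one_lt)))
  · obtain ⟨hmlt, hmsol⟩ : m < p ^ k * (p - 1) ∧ m * a ^ m ≡ t [ZMOD p ^ k] := by simpa using hm
    obtain ⟨hnlt, hnsol⟩ : n < p ^ k * (p - 1) ∧ n * a ^ n ≡ t [ZMOD p ^ k] := by simpa using hn
    exact (existsUnique_modEq_and_mul_pow_modEq hp ha k n t).unique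
      ⟨hmlt, hmn, hmsol⟩ ⟨hnlt, rfl, hnsol⟩
  · obtain ⟨n, ⟨hlt, hclass, hsol⟩, -⟩ := existsUnique_modEq_and_mul_pow_modEq hp ha k r t
    have hr' : r < p - 1 := by simpa using hr
    exact ⟨n, by simpa using ⟨hlt, hsol⟩, Eq.trans hclass (Nat.mod_eq_of_lt hr')⟩

end

/-- For a fixed integer `t`, a positive integer `k` and an odd prime `p`, there are
exactly `p - 1` integers `n` in `{0, 1, …, p^k (p-1) - 1}` such that `p^k ∣ n·2^n - t`. -/
theorem count_n_two_pow_cong (k : ℕ) (hk : 0 < k) (t : ℤ) (p : ℕ)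
    (hp : p.Prime) (hodd : p ≠ 2) :
    ((Finset.range (p ^ k * (p - 1))).filter
      (fun n : ℕ => (p : ℤ) ^ k ∣ (n : ℤ) * (2 : ℤ) ^ n - t)).card = p - 1 :=
  have htwo : Nat.Coprime 2 p := (Nat.coprime_primes Nat.prime_two hp).2 hodd.symm
  count_n_two_pow_cong_general hp (Nat.isCoprime_iff_coprime.2 htwo) k t
end

section
/- With notation as in the context, the numerator of each of a, b, c has absolute value at most 4Y³ and the denominator of each of a, b, c is at most Y³. In particular, max{h(a), h(b), h(c)} ≤ log(4Y³), where for a rational number r = p/q in lowest terms with q > 0, h(r) = log max{|p|, q}. -/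
/-! Applying `(E - α)(E - β)` and `(E - α)²`, where `E` is the shift, to
`u n = (a n + c) αⁿ + b βⁿ` isolates `a` and `b`, and `c = u 0 - b`. So each coefficient is a
quotient of the form `(u 2 - s * u 1 + t * u 0) / D`, whose data are polynomials of degree at most
two in the roots. The nonzero integer roots divide `r₃`, so they are at most `Y` in absolute value,
and it only remains to insert this bound. -/

section Coefficients

variable {R : Type*} [CommRing R] {α β a b c : R} {v : ℕ → R}

theorem doubleRootLinearCoeff_mul_eq (hv : ∀ n < 3, v n = (a * n + c) * α ^ n + b * β ^ n) :
    a * (α * (α - β)) = v 2 - (α + β) * v 1 + α * β * v 0 := by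
  rw [hv 0 (by decide), hv 1 (by decide), hv 2 (by decide)]
  push_cast
  ring

theorem simpleRootCoeff_mul_eq (hv : ∀ n < 3, v n = (a * n + c) * α ^ n + b * β ^ n) :
    b * (α - β) ^ 2 = v 2 - 2 * α * v 1 + α ^ 2 * v 0 := by
  rw [hv 0 (by decide), hv 1 (by decide), hv 2 (by decide)]
  push_cast
  ring

theorem doubleRootConstantCoeff_mul_eq (hv : ∀ n < 3, v n = (a * n + c) * α ^ n + b * β ^ n) :
    c * -(α - β) ^ 2 = v 2 - 2 * α * v 1 + (2 * (α * β) - β ^ 2) * v 0 := by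
  have h₀ : v 0 = c + b := by simpa using hv 0 (by decide)
  linear_combination simpleRootCoeff_mul_eq hv + (α - β) ^ 2 * h₀

end Coefficients

section Bounds

variable {R : Type*} [CommRing R] [LinearOrder R] [IsStrictOrderedRing R] {p q s t x y z Y : R}

theorem abs_mul_le_cube (hY : 4 ≤ Y) (hp : |p| ≤ 2 * Y) (hq : |q| ≤ 2 * Y) :
    |p * q| ≤ Y ^ 3 :=
  calc |p * q| = |p| * |q| := abs_mul p q
    _ ≤ 2 * Y * (2 * Y) := by gcongr
    _ = 4 * Y ^ 2 := by ring
    _ ≤ Y * Y ^ 2 := by gcongr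
    _ = Y ^ 3 := by ring

theorem abs_sub_mul_add_mul_le_four_mul_cube (hY : 3 ≤ Y) (hs : |s| ≤ 2 * Y)
    (ht : |t| ≤ 3 * Y ^ 2) (hx : |x| ≤ Y) (hy : |y| ≤ Y) (hz : |z| ≤ Y) :
    |z - s * y + t * x| ≤ 4 * Y ^ 3 :=
  have hquad : 1 + 2 * Y ≤ Y ^ 2 := by nlinarith
  calc |z - s * y + t * x| ≤ |z| + |s * y| + |t * x| :=
        (abs_add_le _ _).trans (by gcongr; exact abs_sub _ _)
    _ = |z| + |s| * |y| + |t| * |x| := by rw [abs_mul, abs_mul]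
    _ ≤ Y + 2 * Y * Y + 3 * Y ^ 2 * Y := by gcongr
    _ = (1 + 2 * Y) * Y + 3 * Y ^ 3 := by ring
    _ ≤ Y ^ 2 * Y + 3 * Y ^ 3 := by gcongr
    _ = 4 * Y ^ 3 := by ring

theorem abs_two_mul_mul_sub_sq_le (hp : |p| ≤ Y) (hq : |q| ≤ Y) :
    |2 * (p * q) - q ^ 2| ≤ 3 * Y ^ 2 :=
  have hY : 0 ≤ Y := (abs_nonneg p).trans hp
  calc |2 * (p * q) - q ^ 2| ≤ |2 * (p * q)| + |q ^ 2| := abs_sub _ _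
    _ = 2 * (|p| * |q|) + |q| ^ 2 := by rw [abs_mul, abs_mul, abs_two, abs_pow]
    _ ≤ 2 * (Y * Y) + Y ^ 2 := by gcongr
    _ = 3 * Y ^ 2 := by ring

end Bounds

section Rationals

variable {q : ℚ} {N D : ℤ}

theorem eq_divInt_of_mul_eq (hD : D ≠ 0) (h : q * D = N) : q = Rat.divInt N D := by
  rw [Rat.divInt_eq_div, eq_div_iff (Int.cast_ne_zero.mpr hD), h]

theorem abs_num_le_abs_of_mul_eq (hD : D ≠ 0) (h : q * D = N) : |q.num| ≤ |N| := by
  rw [eq_divInt_of_mul_eq hD h]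
  rcases eq_or_ne N 0 with rfl | hN
  · simp
  · exact Int.le_of_dvd (abs_pos.mpr hN) ((abs_dvd_abs _ _).mpr (Rat.num_dvd N hD))

theorem den_le_abs_of_mul_eq (hD : D ≠ 0) (h : q * D = N) : (q.den : ℤ) ≤ |D| := by
  rw [eq_divInt_of_mul_eq hD h]
  exact Int.le_of_dvd (abs_pos.mpr hD) ((dvd_abs _ _).mpr (Rat.den_dvd N D))

theorem log_max_abs_num_den_le {M : ℝ} (hnum : |(q.num : ℝ)| ≤ M) (hden : (q.den : ℝ) ≤ M) :
    Real.log (max |(q.num : ℝ)| (q.den : ℝ)) ≤ Real.log M :=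
  Real.log_le_log (lt_max_of_lt_right (Nat.cast_pos.mpr q.den_pos)) (max_le hnum hden)

end Rationals

section IntegerRoots

variable {α β Y : ℤ} {u : ℕ → ℤ} {a b c : ℚ}

theorem ne_zero_and_abs_roots_le_of_factorization {r₁ r₂ r₃ : ℤ} (hr₃ : r₃ ≠ 0)
    (hpoly : ∀ X : ℤ, X ^ 3 - r₁ * X ^ 2 - r₂ * X - r₃ = (X - α) ^ 2 * (X - β)) :
    α ≠ 0 ∧ |α| ≤ |r₃| ∧ |β| ≤ |r₃| := by
  have hr₃_eq : r₃ = α ^ 2 * β := by linear_combination -hpoly 0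
  have hα : α ∣ r₃ := ⟨α * β, by rw [hr₃_eq]; ring⟩
  have hβ : β ∣ r₃ := hr₃_eq ▸ dvd_mul_left β (α ^ 2)
  have habs {d : ℤ} (hd : d ∣ r₃) : |d| ≤ |r₃| :=
    Int.le_of_dvd (abs_pos.mpr hr₃) ((abs_dvd_abs _ _).mpr hd)
  exact ⟨ne_zero_of_dvd_ne_zero hr₃ hα, habs hα, habs hβ⟩

theorem num_den_bound_of_mul_eq {q : ℚ} {D s t : ℤ} (hY : 3 ≤ Y) (huY : ∀ n < 3, |u n| ≤ Y)
    (hD : D ≠ 0) (hDY : |D| ≤ Y ^ 3) (hs : |s| ≤ 2 * Y) (ht : |t| ≤ 3 * Y ^ 2)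
    (h : q * D = u 2 - s * u 1 + t * u 0) :
    |q.num| ≤ 4 * Y ^ 3 ∧ (q.den : ℤ) ≤ Y ^ 3 := by
  have hN : q * D = (u 2 - s * u 1 + t * u 0 : ℤ) := mod_cast h
  refine ⟨(abs_num_le_abs_of_mul_eq hD hN).trans ?_, (den_le_abs_of_mul_eq hD hN).trans hDY⟩
  exact abs_sub_mul_add_mul_le_four_mul_cube hY hs ht
    (huY 0 (by decide)) (huY 1 (by decide)) (huY 2 (by decide))

theorem num_den_bounds_of_abs_roots_le (hα : α ≠ 0) (hαβ : α ≠ β)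
    (hu : ∀ n < 3, (u n : ℚ) = (a * n + c) * (α : ℚ) ^ n + b * (β : ℚ) ^ n)
    (hY : 4 ≤ Y) (hαY : |α| ≤ Y) (hβY : |β| ≤ Y) (huY : ∀ n < 3, |u n| ≤ Y) :
    (|a.num| ≤ 4 * Y ^ 3 ∧ (a.den : ℤ) ≤ Y ^ 3) ∧
    (|b.num| ≤ 4 * Y ^ 3 ∧ (b.den : ℤ) ≤ Y ^ 3) ∧
    (|c.num| ≤ 4 * Y ^ 3 ∧ (c.den : ℤ) ≤ Y ^ 3) := by
  have hY₃ : 3 ≤ Y := by linarith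
  have hsub : α - β ≠ 0 := sub_ne_zero.mpr hαβ
  have hsubY : |α - β| ≤ 2 * Y := (abs_sub α β).trans (by linarith)
  have haddY : |α + β| ≤ 2 * Y := (abs_add_le α β).trans (by linarith)
  have htwoY : |2 * α| ≤ 2 * Y := by rw [abs_mul, abs_two]; gcongr
  have hmulY : |α * β| ≤ 3 * Y ^ 2 := by rw [abs_mul]; nlinarith [abs_nonneg α, abs_nonneg β]
  have hsqY : |α ^ 2| ≤ 3 * Y ^ 2 := by rw [abs_pow]; nlinarith [abs_nonneg α]
  have hsubsqY : |(α - β) ^ 2| ≤ Y ^ 3 := sq (α - β) ▸ abs_mul_le_cube hY hsubY hsubY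
  refine ⟨?_, ?_, ?_⟩
  · exact num_den_bound_of_mul_eq hY₃ huY (mul_ne_zero hα hsub)
      (abs_mul_le_cube hY (by linarith) hsubY) haddY hmulY
      (mod_cast doubleRootLinearCoeff_mul_eq hu)
  · exact num_den_bound_of_mul_eq hY₃ huY (pow_ne_zero 2 hsub)
      hsubsqY htwoY hsqY (mod_cast simpleRootCoeff_mul_eq hu)
  · exact num_den_bound_of_mul_eq hY₃ huY (neg_ne_zero.mpr (pow_ne_zero 2 hsub))
      ((abs_neg _).trans_le hsubsqY) htwoY (abs_two_mul_mul_sub_sq_le hαY hβY)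
      (mod_cast doubleRootConstantCoeff_mul_eq hu)

theorem numerator_denominator_height_bound_general (hα : α ≠ 0) (hαβ : α ≠ β)
    (hu : ∀ n < 3, (u n : ℚ) = (a * n + c) * (α : ℚ) ^ n + b * (β : ℚ) ^ n)
    (hY : 4 ≤ Y) (hαY : |α| ≤ Y) (hβY : |β| ≤ Y) (huY : ∀ n < 3, |u n| ≤ Y) :
    (|a.num| ≤ 4 * Y ^ 3 ∧ |b.num| ≤ 4 * Y ^ 3 ∧ |c.num| ≤ 4 * Y ^ 3) ∧
    ((a.den : ℤ) ≤ Y ^ 3 ∧ (b.den : ℤ) ≤ Y ^ 3 ∧ (c.den : ℤ) ≤ Y ^ 3) ∧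
    max (max (Real.log (max |(a.num : ℝ)| (a.den : ℝ)))
             (Real.log (max |(b.num : ℝ)| (b.den : ℝ))))
        (Real.log (max |(c.num : ℝ)| (c.den : ℝ)))
      ≤ Real.log (4 * (Y : ℝ) ^ 3) := by
  obtain ⟨⟨han, had⟩, ⟨hbn, hbd⟩, ⟨hcn, hcd⟩⟩ :=
    num_den_bounds_of_abs_roots_le hα hαβ hu hY hαY hβY huY
  have hcube : Y ^ 3 ≤ 4 * Y ^ 3 := le_mul_of_one_le_left (by positivity) (by norm_num)
  have hheight {q : ℚ} (hn : |q.num| ≤ 4 * Y ^ 3) (hd : (q.den : ℤ) ≤ Y ^ 3) :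
      Real.log (max |(q.num : ℝ)| (q.den : ℝ)) ≤ Real.log (4 * (Y : ℝ) ^ 3) :=
    log_max_abs_num_den_le (mod_cast hn) (mod_cast hd.trans hcube)
  exact ⟨⟨han, hbn, hcn⟩, ⟨had, hbd, hcd⟩,
    max_le (max_le (hheight han had) (hheight hbn hbd)) (hheight hcn hcd)⟩

end IntegerRoots

/-- Lemma 3.1 of Luca–Noubissie: with `u_n = (a n + c) α^n + b β^n` a ternary recurrence
whose characteristic polynomial is `(X-α)²(X-β)` with `1 ∈ {α, β}` and `α/β ∉ {1, -1}`,
and `Y = max{|r₁|, |r₂|, |r₃|, |u₀|, |u₁|, |u₂|, 11}`, the numerators of `a, b, c` are at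
most `4Y³` in absolute value, their denominators are at most `Y³`, and in particular
`max{h(a), h(b), h(c)} ≤ log (4Y³)`, where `h(p/q) = log max{|p|, q}`. -/
theorem numerator_denominator_height_bound
    (r₁ r₂ r₃ : ℤ) (hr₁ : r₁ ≠ 0) (hr₂ : r₂ ≠ 0) (hr₃ : r₃ ≠ 0)
    (α β : ℤ)
    (hpoly : ∀ X : ℤ, X ^ 3 - r₁ * X ^ 2 - r₂ * X - r₃ = (X - α) ^ 2 * (X - β))
    (hone : α = 1 ∨ β = 1) (hαβ : α ≠ β) (hαβ' : α ≠ -β)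
    (u : ℕ → ℤ)
    (hrec : ∀ n, 3 ≤ n → u n = r₁ * u (n - 1) + r₂ * u (n - 2) + r₃ * u (n - 3))
    (a b c : ℚ) (ha : a ≠ 0)
    (hu : ∀ n : ℕ, (u n : ℚ) = (a * n + c) * (α : ℚ) ^ n + b * (β : ℚ) ^ n)
    (Y : ℤ)
    (hY : Y = max (max (max |r₁| |r₂|) (max |r₃| |u 0|)) (max (max |u 1| |u 2|) 11)) :
    (|a.num| ≤ 4 * Y ^ 3 ∧ |b.num| ≤ 4 * Y ^ 3 ∧ |c.num| ≤ 4 * Y ^ 3) ∧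
    ((a.den : ℤ) ≤ Y ^ 3 ∧ (b.den : ℤ) ≤ Y ^ 3 ∧ (c.den : ℤ) ≤ Y ^ 3) ∧
    max (max (Real.log (max |(a.num : ℝ)| (a.den : ℝ)))
             (Real.log (max |(b.num : ℝ)| (b.den : ℝ))))
        (Real.log (max |(c.num : ℝ)| (c.den : ℝ)))
      ≤ Real.log (4 * (Y : ℝ) ^ 3) := by
  obtain ⟨hα, hαr₃, hβr₃⟩ := ne_zero_and_abs_roots_le_of_factorization hr₃ hpoly
  exact numerator_denominator_height_bound_general hα hαβ (fun n _ ↦ hu n) (by omega) (by omega)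
    (by omega) (fun n hn ↦ by interval_cases n <;> omega)
end

section
/- With notation as in the context, if u_n = 0 for some index n ≥ 0, then n < 39·Y·log Y. -/
/-! Multiplying `(a n + c) α ^ n = -b β ^ n` by `α (α - β)²` turns it into an equation
`p α ^ n = q β ^ n` between integers, where `p` and `q` are polynomials in `α`, `β`, `n` and the
initial values. If `q ≠ 0`, then, as `|α| ≠ |β|` are integers of size at most `Y`, the ratio of the
larger to the smaller is at least `1 + 1 / Y`, so that `n` is at most about `Y log (max |p| |q|)`,
which is of order `Y (log Y + log n)`. If `q = 0`, then `b = 0`, and `n = -c / a` is bounded by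
`|u₁| + 1`. -/

section Coefficients

variable {R : Type*} [CommRing R]

/-- The value at index `0` of `(E - x) (E - y) u`, where `E` is the shift `(E u) k = u (k + 1)`.
As `E - x` annihilates `x ^ k` and `(E - x) ^ 2` annihilates `k * x ^ k`, it isolates the
coefficients `b` (for `x = y = α`) and `a` (for `x = α`, `y = β`) of
`u k = (a * k + c) * α ^ k + b * β ^ k`. -/
def secondDiff (x y : R) (u : ℕ → R) : R :=
  u 2 - (x + y) * u 1 + x * y * u 0

/-- For `u k = (a * k + c) * α ^ k + b * β ^ k`, this is the coefficient `a * n + c` cleared of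
denominators by the factor `α * (α - β) ^ 2`. It is written in terms of `u 0`, `u 1`, `u 2` only,
which makes it an integer when `α`, `β` and `u` are. -/
def linearFactor (α β : R) (u : ℕ → R) (n : ℕ) : R :=
  secondDiff α β u * (α - β) * n + α * ((α - β) ^ 2 * u 0 - secondDiff α α u)

theorem intCast_secondDiff (x y : ℤ) (u : ℕ → ℤ) :
    ((secondDiff x y u : ℤ) : R) = secondDiff (x : R) y (fun k ↦ (u k : R)) := by
  simp [secondDiff]

theorem intCast_linearFactor (α β : ℤ) (u : ℕ → ℤ) (n : ℕ) :
    ((linearFactor α β u n : ℤ) : R) = linearFactor (α : R) β (fun k ↦ (u k : R)) n := by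
  simp [linearFactor, intCast_secondDiff]

variable {u : ℕ → R} {α β a b c : R}

theorem secondDiff_self_eq (hu : ∀ k : ℕ, u k = (a * k + c) * α ^ k + b * β ^ k) :
    secondDiff α α u = b * (α - β) ^ 2 := by
  rw [secondDiff, hu 0, hu 1, hu 2]
  push_cast
  ring

theorem secondDiff_eq (hu : ∀ k : ℕ, u k = (a * k + c) * α ^ k + b * β ^ k) :
    secondDiff α β u = a * α * (α - β) := by
  rw [secondDiff, hu 0, hu 1, hu 2]
  push_cast
  ring

theorem linearFactor_eq (hu : ∀ k : ℕ, u k = (a * k + c) * α ^ k + b * β ^ k) (n : ℕ) :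
    linearFactor α β u n = α * (α - β) ^ 2 * (a * n + c) := by
  rw [linearFactor, secondDiff_eq hu, secondDiff_self_eq hu, hu 0]
  push_cast
  ring

theorem linearFactor_mul_pow_eq (hu : ∀ k : ℕ, u k = (a * k + c) * α ^ k + b * β ^ k)
    {n : ℕ} (hn : u n = 0) :
    linearFactor α β u n * α ^ n = -(α * secondDiff α α u) * β ^ n := by
  rw [linearFactor_eq hu, secondDiff_self_eq hu]
  linear_combination α * (α - β) ^ 2 * (hn - hu n)

end Coefficients

section IntegerSequences

variable {R : Type*} [CommRing R] [CharZero R] {u : ℕ → ℤ} {α β : ℤ} {a b c : R} {n : ℕ}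

theorem int_linearFactor_mul_pow_eq
    (hu : ∀ k : ℕ, (u k : R) = (a * k + c) * (α : R) ^ k + b * (β : R) ^ k) (hn : u n = 0) :
    linearFactor α β u n * α ^ n = -(α * secondDiff α α u) * β ^ n := by
  apply Int.cast_injective (α := R)
  push_cast [intCast_linearFactor, intCast_secondDiff]
  exact linearFactor_mul_pow_eq hu (by rw [hn, Int.cast_zero])

theorem le_abs_add_one_of_eq_zero [IsDomain R] (ha : a ≠ 0) (hα : α ≠ 0)
    (hu : ∀ k : ℕ, (u k : R) = (a * k + c) * (α : R) ^ k) (hn : u n = 0) :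
    (n : ℤ) ≤ |u 1| + 1 := by
  have hαR : (α : R) ≠ 0 := by exact_mod_cast hα
  have hroot : a * n + c = 0 := by
    simpa [hn, hαR] using (hu n).symm
  have hslope : ((u 1 - α * u 0 : ℤ) : R) = a * α := by
    push_cast [hu]
    ring
  have hslope_ne : u 1 - α * u 0 ≠ 0 := by
    intro h
    exact mul_ne_zero ha hαR (by rw [← hslope, h, Int.cast_zero])
  have hmul : (u 1 - α * u 0) * ((n : ℤ) - 1) = -u 1 := by
    apply Int.cast_injective (α := R)
    rw [Int.cast_mul, hslope]
    push_cast [hu]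
    linear_combination (α : R) * hroot
  have hle : |(n : ℤ) - 1| ≤ |u 1| := by
    rw [← abs_neg (u 1), ← hmul, abs_mul]
    exact le_mul_of_one_le_left (abs_nonneg _) (Int.one_le_abs hslope_ne)
  linarith [le_abs_self ((n : ℤ) - 1)]

end IntegerSequences

section Bounds

variable {R : Type*} [CommRing R] [LinearOrder R] [IsStrictOrderedRing R] {u : ℕ → R} {Y : R}

theorem abs_secondDiff_le (hu₀ : |u 0| ≤ Y) (hu₁ : |u 1| ≤ Y) (hu₂ : |u 2| ≤ Y) (x y : R) :
    |secondDiff x y u| ≤ Y * (1 + |x|) * (1 + |y|) :=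
  calc |secondDiff x y u| ≤ |u 2| + |x + y| * |u 1| + |x| * |y| * |u 0| := by
        rw [secondDiff, ← abs_mul, ← abs_mul, ← abs_mul]
        exact (abs_add_le _ _).trans (add_le_add_left (abs_sub _ _) _)
    _ ≤ Y + (|x| + |y|) * Y + |x| * |y| * Y := by
        gcongr
        exact abs_add_le x y
    _ = Y * (1 + |x|) * (1 + |y|) := by ring

variable {α β : R} (hY : 4 ≤ Y) (hα : |α| ≤ Y) (hβ : |β| ≤ Y)
  (hu₀ : |u 0| ≤ Y) (hu₁ : |u 1| ≤ Y) (hu₂ : |u 2| ≤ Y)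

include hY hα hβ hu₀ hu₁ hu₂

theorem abs_secondDiff_le_pow : |secondDiff α β u| ≤ Y ^ 4 := by
  have hY1 : 1 ≤ Y := by linarith
  calc |secondDiff α β u| ≤ Y * (1 + |α|) * (1 + |β|) := abs_secondDiff_le hu₀ hu₁ hu₂ α β
    _ ≤ Y * (Y + Y) * (Y + Y) := by gcongr
    _ = 4 * Y ^ 3 := by ring
    _ ≤ Y * Y ^ 3 := by gcongr
    _ = Y ^ 4 := by ring

theorem abs_linearFactor_le {n : ℕ} (hn : n ≠ 0) :
    |linearFactor α β u n| ≤ Y ^ 6 * n := by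
  have hsub : |α - β| ≤ Y + Y := (abs_sub α β).trans (add_le_add hα hβ)
  have hD := abs_secondDiff_le_pow hY hα hβ hu₀ hu₁ hu₂
  have hB := abs_secondDiff_le_pow hY hα hα hu₀ hu₁ hu₂
  have hn1 : (1 : R) ≤ n := by exact_mod_cast Nat.one_le_iff_ne_zero.mpr hn
  calc |linearFactor α β u n|
      ≤ |secondDiff α β u * (α - β) * n| + |α * ((α - β) ^ 2 * u 0 - secondDiff α α u)| :=
        abs_add_le _ _
    _ = |secondDiff α β u| * |α - β| * n + |α| * |(α - β) ^ 2 * u 0 - secondDiff α α u| := by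
        simp only [abs_mul, Nat.abs_cast]
    _ ≤ |secondDiff α β u| * |α - β| * n + |α| * (|α - β| ^ 2 * |u 0| + |secondDiff α α u|) := by
        rw [← abs_pow, ← abs_mul ((α - β) ^ 2)]
        gcongr
        exact abs_sub _ _
    _ ≤ Y ^ 4 * (Y + Y) * n + Y * ((Y + Y) ^ 2 * Y + Y ^ 4) := by gcongr
    _ = 2 * Y ^ 5 * n + (4 * Y ^ 4 + Y ^ 5) * 1 := by ring
    _ ≤ 2 * Y ^ 5 * n + (Y * Y ^ 4 + Y ^ 5) * n := by gcongr
    _ = 4 * Y ^ 5 * n := by ring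
    _ ≤ Y * Y ^ 5 * n := by gcongr
    _ = Y ^ 6 * n := by ring

end Bounds

section Logarithms

theorem le_mul_log_of_pow_le_mul_pow {x y K : ℝ} {n : ℕ} (hx : 0 < x) (hxy : x + 1 ≤ y)
    (h : y ^ n ≤ K * x ^ n) : n ≤ y * Real.log K := by
  have hy : 0 < y := by linarith
  have hlog : 1 / y ≤ Real.log (y / x) :=
    calc 1 / y ≤ 1 - (y / x)⁻¹ := by
          rw [inv_div, one_sub_div hy.ne']
          gcongr
          linarith
      _ ≤ Real.log (y / x) := Real.one_sub_inv_le_log_of_pos (div_pos hy hx)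
  have hpow : (y / x) ^ n ≤ K := by
    rwa [div_pow, div_le_iff₀ (pow_pos hx n)]
  calc (n : ℝ) = y * (n * (1 / y)) := by field_simp
    _ ≤ y * (n * Real.log (y / x)) := by gcongr
    _ = y * Real.log ((y / x) ^ n) := by rw [Real.log_pow]
    _ ≤ y * Real.log K := by gcongr

theorem le_mul_log_of_mul_pow_eq_mul_pow {x y p q : ℤ} {Y K : ℝ} {n : ℕ}
    (hx : x ≠ 0) (hy : y ≠ 0) (hxy : |x| ≠ |y|) (hp : p ≠ 0) (hq : q ≠ 0)
    (hxY : |x| ≤ Y) (hyY : |y| ≤ Y) (hpK : |p| ≤ K) (hqK : |q| ≤ K)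
    (h : p * x ^ n = q * y ^ n) : n ≤ Y * Real.log K := by
  wlog hlt : |x| < |y| generalizing x y p q
  · exact this hy hx hxy.symm hq hp hyY hxY hqK hpK h.symm (hxy.lt_or_gt.resolve_left hlt)
  have habs : |p| * |x| ^ n = |q| * |y| ^ n := by
    rw [← abs_pow, ← abs_pow, ← abs_mul, ← abs_mul, h]
  have hpow : (|y| : ℝ) ^ n ≤ K * |(x : ℝ)| ^ n :=
    calc (|y| : ℝ) ^ n ≤ |(q : ℝ)| * |(y : ℝ)| ^ n :=
          le_mul_of_one_le_left (by positivity) (by exact_mod_cast Int.one_le_abs hq)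
      _ = |(p : ℝ)| * |(x : ℝ)| ^ n := by exact_mod_cast habs.symm
      _ ≤ K * |(x : ℝ)| ^ n := by
          gcongr
          exact_mod_cast hpK
  have hK : 1 ≤ K := le_trans (by exact_mod_cast Int.one_le_abs hp) hpK
  calc (n : ℝ) ≤ |(y : ℝ)| * Real.log K :=
        le_mul_log_of_pow_le_mul_pow (by positivity) (by exact_mod_cast hlt) hpow
    _ ≤ Y * Real.log K := by
        have hlog_nonneg := Real.log_nonneg hK
        gcongr
        exact_mod_cast hyY

theorem le_two_mul_mul_log_of_le_mul_log {t Y : ℝ} (ht : 0 < t) (hY : 0 < Y) (k : ℕ)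
    (h : t ≤ Y * Real.log (Y ^ k * t)) : t ≤ 2 * (k + 1) * Y * Real.log Y := by
  have hlog_t : Real.log t ≤ t / (2 * Y) + Real.log Y := by
    have hquot := Real.log_le_sub_one_of_pos (show 0 < t / (2 * Y) by positivity)
    rw [Real.log_div ht.ne' (by positivity), Real.log_mul two_ne_zero hY.ne'] at hquot
    linarith [Real.log_two_lt_d9]
  have hsplit : t ≤ Y * ((k + 1) * Real.log Y) + t / 2 :=
    calc t ≤ Y * (k * Real.log Y + Real.log t) := by
          rwa [Real.log_mul (by positivity) ht.ne', Real.log_pow] at h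
      _ ≤ Y * (k * Real.log Y + (t / (2 * Y) + Real.log Y)) := by gcongr
      _ = Y * ((k + 1) * Real.log Y) + t / 2 := by
          field_simp
          ring
  linarith

end Logarithms

section ZeroIndex

variable {R : Type*} [CommRing R] [CharZero R] {u : ℕ → ℤ} {α β Y : ℤ} {a b c : R} {n : ℕ}

theorem zero_index_le_of_secondDiff_ne_zero (hα : α ≠ 0) (hβ : β ≠ 0) (hαβ : |α| ≠ |β|)
    (hu : ∀ k : ℕ, (u k : R) = (a * k + c) * (α : R) ^ k + b * (β : R) ^ k)
    (hB : secondDiff α α u ≠ 0) (hY : 4 ≤ Y) (hαY : |α| ≤ Y) (hβY : |β| ≤ Y)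
    (hu₀ : |u 0| ≤ Y) (hu₁ : |u 1| ≤ Y) (hu₂ : |u 2| ≤ Y) (hn : u n = 0) :
    (n : ℝ) ≤ 14 * Y * Real.log Y := by
  have hYR : (4 : ℝ) ≤ Y := by exact_mod_cast hY
  rcases eq_or_ne n 0 with rfl | hn0
  · rw [Nat.cast_zero]
    positivity
  have heq := int_linearFactor_mul_pow_eq hu hn
  have hq : -(α * secondDiff α α u) ≠ 0 := neg_ne_zero.mpr (mul_ne_zero hα hB)
  have hp : linearFactor α β u n ≠ 0 :=
    left_ne_zero_of_mul (heq ▸ mul_ne_zero hq (pow_ne_zero n hβ))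
  have hpK : |linearFactor α β u n| ≤ Y ^ 6 * n :=
    abs_linearFactor_le hY hαY hβY hu₀ hu₁ hu₂ hn0
  have hqK : |-(α * secondDiff α α u)| ≤ Y ^ 6 * n :=
    calc |-(α * secondDiff α α u)| = |α| * |secondDiff α α u| := by rw [abs_neg, abs_mul]
      _ ≤ Y * Y ^ 4 := by
          gcongr
          exact abs_secondDiff_le_pow hY hαY hαY hu₀ hu₁ hu₂
      _ = Y ^ 5 * 1 := by ring
      _ ≤ Y ^ 6 * n := by gcongr <;> lia
  have hlog : (n : ℝ) ≤ Y * Real.log (Y ^ 6 * n) :=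
    le_mul_log_of_mul_pow_eq_mul_pow hα hβ hαβ hp hq (by exact_mod_cast hαY)
      (by exact_mod_cast hβY) (by exact_mod_cast hpK) (by exact_mod_cast hqK) heq
  calc (n : ℝ) ≤ 2 * ((6 : ℕ) + 1) * Y * Real.log Y :=
        le_two_mul_mul_log_of_le_mul_log (by positivity) (by linarith) 6 hlog
    _ = 14 * Y * Real.log Y := by norm_num

theorem zero_index_le_of_secondDiff_eq_zero [IsDomain R] (ha : a ≠ 0) (hα : α ≠ 0) (hαβ : α ≠ β)
    (hu : ∀ k : ℕ, (u k : R) = (a * k + c) * (α : R) ^ k + b * (β : R) ^ k)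
    (hB : secondDiff α α u = 0) (hn : u n = 0) : (n : ℤ) ≤ |u 1| + 1 := by
  have hb : b = 0 := by
    have hsub : (α : R) - β ≠ 0 := sub_ne_zero.mpr (by exact_mod_cast hαβ)
    have h := secondDiff_self_eq hu
    rw [← intCast_secondDiff, hB, Int.cast_zero] at h
    exact (mul_eq_zero.mp h.symm).resolve_right (pow_ne_zero 2 hsub)
  exact le_abs_add_one_of_eq_zero ha hα (by simpa [hb] using hu) hn

end ZeroIndex

theorem zero_index_bound_general {R : Type*} [CommRing R] [IsDomain R] [CharZero R]
    {r₁ r₂ r₃ : ℤ} (hr₃ : r₃ ≠ 0) {α β : ℤ}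
    (hpoly : ∀ X : ℤ, X ^ 3 - r₁ * X ^ 2 - r₂ * X - r₃ = (X - α) ^ 2 * (X - β))
    (hαβ : α ≠ β) (hαβ' : α ≠ -β) {u : ℕ → ℤ} {a b c : R} (ha : a ≠ 0)
    (hu : ∀ n : ℕ, (u n : R) = (a * n + c) * (α : R) ^ n + b * (β : R) ^ n) {Y : ℤ}
    (hY : Y = max (max (max |r₁| |r₂|) (max |r₃| |u 0|)) (max (max |u 1| |u 2|) 11))
    {n : ℕ} (hn : u n = 0) : (n : ℝ) < 39 * (Y : ℝ) * Real.log (Y : ℝ) := by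
  obtain ⟨hr₃Y, hu₀Y, hu₁Y, hu₂Y, hY11⟩ :
      |r₃| ≤ Y ∧ |u 0| ≤ Y ∧ |u 1| ≤ Y ∧ |u 2| ≤ Y ∧ 11 ≤ Y := by simp [hY]
  have hr₃_eq : r₃ = α ^ 2 * β := by linear_combination -hpoly 0
  have hα_dvd : α ∣ r₃ := hr₃_eq ▸ (dvd_pow_self α two_ne_zero).mul_right β
  have hβ_dvd : β ∣ r₃ := hr₃_eq ▸ dvd_mul_left β (α ^ 2)
  have hα := ne_zero_of_dvd_ne_zero hr₃ hα_dvd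
  have hβ := ne_zero_of_dvd_ne_zero hr₃ hβ_dvd
  have hYR : (11 : ℝ) ≤ Y := by exact_mod_cast hY11
  have hlog : 1 ≤ Real.log Y := by
    rw [Real.le_log_iff_exp_le (by linarith)]
    linarith [Real.exp_one_lt_three]
  have hYlog : (Y : ℝ) ≤ Y * Real.log Y := le_mul_of_one_le_right (by linarith) hlog
  by_cases hB : secondDiff α α u = 0
  · have hle : (n : ℤ) ≤ Y + 1 :=
      (zero_index_le_of_secondDiff_eq_zero ha hα hαβ hu hB hn).trans (by gcongr)
    have : (n : ℝ) ≤ Y + 1 := by exact_mod_cast hle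
    linarith
  · have habs_le {d : ℤ} (hd : d ∣ r₃) : |d| ≤ Y :=
      (Int.le_of_dvd (abs_pos.mpr hr₃) ((abs_dvd_abs d r₃).mpr hd)).trans hr₃Y
    have habs_ne : |α| ≠ |β| := fun h ↦ (abs_eq_abs.mp h).elim hαβ hαβ'
    have := zero_index_le_of_secondDiff_ne_zero hα hβ habs_ne hu hB (by linarith)
      (habs_le hα_dvd) (habs_le hβ_dvd) hu₀Y hu₁Y hu₂Y hn
    linarith

/-- Lemma 3.2 of Luca–Noubissie: with `u_n = (a n + c) α^n + b β^n` a ternary recurrence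
whose characteristic polynomial is `(X-α)²(X-β)` with `1 ∈ {α, β}` and `α/β ∉ {1, -1}`,
and `Y = max{|r₁|, |r₂|, |r₃|, |u₀|, |u₁|, |u₂|, 11}`: if `u_n = 0`, then `n < 39 Y log Y`. -/
theorem zero_index_bound
    (r₁ r₂ r₃ : ℤ) (hr₁ : r₁ ≠ 0) (hr₂ : r₂ ≠ 0) (hr₃ : r₃ ≠ 0)
    (α β : ℤ)
    (hpoly : ∀ X : ℤ, X ^ 3 - r₁ * X ^ 2 - r₂ * X - r₃ = (X - α) ^ 2 * (X - β))
    (hone : α = 1 ∨ β = 1) (hαβ : α ≠ β) (hαβ' : α ≠ -β)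
    (u : ℕ → ℤ)
    (hrec : ∀ n, 3 ≤ n → u n = r₁ * u (n - 1) + r₂ * u (n - 2) + r₃ * u (n - 3))
    (a b c : ℚ) (ha : a ≠ 0)
    (hu : ∀ n : ℕ, (u n : ℚ) = (a * n + c) * (α : ℚ) ^ n + b * (β : ℚ) ^ n)
    (Y : ℤ)
    (hY : Y = max (max (max |r₁| |r₂|) (max |r₃| |u 0|)) (max (max |u 1| |u 2|) 11))
    (n : ℕ) (hn : u n = 0) :
    (n : ℝ) < 39 * (Y : ℝ) * Real.log (Y : ℝ) :=
  zero_index_bound_general hr₃ hpoly hαβ hαβ' ha hu hY hn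
end
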